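/- arXiv:2410.23455 — 4 statements merged into one kernel-verified Lean document; each statement's English description precedes it below -/
import Mathlib

section
/- Let G be an abelian group and n a natural number. Suppose ε assigns an element of G to each edge of the n-dimensional discrete hypercube in such a way that for every square 2-face (α,{i,j}) one has ε(α,i)·ε(α+eᵢ,j) = ε(α,j)·ε(α+eⱼ,i). Then there exists a function η : {0,1}ⁿ → G such that ε(α,i) = η(α+eᵢ)·η(α)⁻¹ for every edge (α,i). (Every multiplicative 1-cocycle on the hypercube is a coboundary.) -/
/-!
The potential `η` is built by adjoining one coordinate direction at a time. Suppose `η` is a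
potential on the face of vertices supported in a finite set `S` of coordinates, and let `m ∉ S`.
Extend it to the face spanned by `insert m S` by integrating along direction `m`: a vertex `α` with
`α m = true` receives `η β * ε β m`, where `β` is `α` with its `m`-th coordinate reset to `false`.
The edges in direction `m` are then correct by construction, and an edge in direction `i ∈ S` on
the far side `α m = true` is correct by the cocycle identity on the square `(β, {i, m})`, whose
opposite edge lies in the face where `η` is already a potential.
-/

/-- A cocycle has a potential on the face of the cube spanned by any finite set `S` of
directions. -/
lemma exists_potential_on_face {G : Type*} [CommGroup G] {n : ℕ}
    (ε : (Fin n → Bool) → Fin n → G)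
    (hcocycle : ∀ (α : Fin n → Bool) (i j : Fin n), i ≠ j → α i = false → α j = false →
      ε α i * ε (Function.update α i true) j = ε α j * ε (Function.update α j true) i)
    (S : Finset (Fin n)) :
    ∃ η : (Fin n → Bool) → G, ∀ (α : Fin n → Bool) (i : Fin n), (∀ j, α j = true → j ∈ S) →
      i ∈ S → α i = false → ε α i * η α = η (Function.update α i true) := by
  induction S using Finset.induction_on with
  | empty => exact ⟨fun _ => 1, fun _ _ _ hi => absurd hi (Finset.notMem_empty _)⟩
  | insert m S hm ih =>
    obtain ⟨η, hη⟩ := ih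
    refine ⟨fun α => if α m = true then
      η (Function.update α m false) * ε (Function.update α m false) m else η α, ?_⟩
    intro α i hα hi hαi
    by_cases him : i = m
    · subst him
      have hself : Function.update α i false = α := by rw [← hαi, Function.update_eq_self]
      simp [hαi, hself, mul_comm]
    · have hiS : i ∈ S := (Finset.mem_insert.mp hi).resolve_left him
      have hmi : m ≠ i := Ne.symm him
      by_cases hαm : α m = true
      · obtain ⟨β, hβ⟩ : ∃ β, β = Function.update α m false := ⟨_, rfl⟩
        have hβi : β i = false := by simp [hβ, him, hαi]
        have hβm : β m = false := by simp [hβ]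
        have hβα : Function.update β m true = α := by
          rw [hβ, Function.update_idem, ← hαm, Function.update_eq_self]
        have hβS : ∀ j, β j = true → j ∈ S := by
          intro j hj
          have hjm : j ≠ m := by
            rintro rfl
            simp [hβm] at hj
          have hαj : α j = true := by simpa [hβ, hjm] using hj
          exact (Finset.mem_insert.mp (hα j hαj)).resolve_left hjm
        have hsquare := hcocycle β i m him hβi hβm
        rw [hβα] at hsquare
        have hcomm : Function.update (Function.update α i true) m false
            = Function.update β i true := by
          rw [hβ, Function.update_comm hmi]
        simp only [Function.update_of_ne hmi, hαm, if_true, hcomm, ← hβ,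
          ← hη β i hβS hiS hβi]
        calc ε α i * (η β * ε β m) = η β * (ε β m * ε α i) := by
              rw [mul_left_comm, mul_comm (ε α i)]
          _ = ε β i * η β * ε (Function.update β i true) m := by
              rw [← hsquare, ← mul_assoc, mul_comm (η β)]
      · have hαS : ∀ j, α j = true → j ∈ S := by
          intro j hj
          refine (Finset.mem_insert.mp (hα j hj)).resolve_left ?_
          rintro rfl
          exact hαm hj
        simpa [Function.update_of_ne hmi, hαm] using hη α i hαS hiS hαi

/-- Every multiplicative `G`-valued 1-cocycle on the `n`-dimensional discrete hypercube
is a coboundary: if `ε` assigns an element of the abelian group `G` to each edge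
(a pair `(α, i)` with `α i = false`, joining `α` to `Function.update α i true`)
in such a way that the two ways around every square 2-face agree, then there is a
vertex function `η` with `ε (α, i) = η (α + eᵢ) · η α⁻¹` for every edge. -/
theorem hypercube_one_cocycle_is_coboundary {G : Type*} [CommGroup G] (n : ℕ)
    (ε : (Fin n → Bool) → Fin n → G)
    (hcocycle : ∀ (α : Fin n → Bool) (i j : Fin n), i ≠ j → α i = false → α j = false →
      ε α i * ε (Function.update α i true) j = ε α j * ε (Function.update α j true) i) :
    ∃ η : (Fin n → Bool) → G, ∀ (α : Fin n → Bool) (i : Fin n), α i = false →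
      ε α i = η (Function.update α i true) * (η α)⁻¹ := by
  obtain ⟨η, hη⟩ := exists_potential_on_face ε hcocycle Finset.univ
  exact ⟨η, fun α i hαi => eq_mul_inv_of_mul_eq
    (hη α i (fun j _ => Finset.mem_univ j) (Finset.mem_univ i) hαi)⟩
end

section
/- Let G be an abelian group, let m ∈ G satisfy m² = 1, and let σ assign to each square 2-face of the n-dimensional discrete hypercube an element σ(α,{i,j}) ∈ G with σ(α,{i,j})² = 1. Assume that for every 3-dimensional subcube (every vertex α and triple of distinct indices i,j,k with αᵢ = αⱼ = αₖ = 0) the product of the values of σ on its six square 2-faces equals 1. Then there exists an assignment ε of elements of G to the edges of the hypercube such that for every square 2-face one has ε(α,i)·ε(α+eᵢ,j) = m·σ(α,{i,j})·ε(α,j)·ε(α+eⱼ,i). (Existence of a valid sign assignment for a commutativity 2-cocycle.) -/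
/-!
Put `τ = m * σ`. Since `m ^ 6 = 1`, `τ` is again a `2`-cocycle on the cube with values of order
dividing two, and the claim is that `τ` is a coboundary. This holds because the cube is
contractible, and a primitive can be written down. Declare an edge `(α, i)` trivial when all
coordinates of `α` beyond `i` vanish (these edges form a spanning tree), and remove the other
nonzero coordinates from the top downwards through faces whose remaining edges are trivial. This
forces
`ε (α, i) = ∏ τ (α truncated below k, {i, k})`, the product over `k > i` with `α k = 1`.

For `i < j` the face relation is proved for the partial products over `k < K`, with the face
`(α, {i, j})` replaced by its truncation below `K`, by induction on `K ≥ j + 1` (`partialSign_face`).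
At `K = j + 1` both sides differ by the square of one value of `τ`; passing from `K` to `K + 1` when
`α K = 1` is the cocycle condition on the `3`-cube with directions `i, j, K` at the truncation of `α`.
-/

/-- The vertex obtained from `α` by setting all coordinates with index at least `K` to `0`. -/
def cubeTrunc {n : ℕ} (K : ℕ) (α : Fin n → Bool) : Fin n → Bool :=
  fun l => if l.val < K then α l else false

/-- The product of `τ (cubeTrunc k α) i k` over the indices `k` with `i < k < K` and `α k = 1`,
defined by recursion on `K`. -/
def partialSign {G : Type*} [CommGroup G] {n : ℕ} (τ : (Fin n → Bool) → Fin n → Fin n → G) :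
    ℕ → (Fin n → Bool) → Fin n → G
  | 0, _, _ => 1
  | K + 1, α, i => partialSign τ K α i *
      if h : K < n then
        if i.val < K ∧ α ⟨K, h⟩ = true then τ (cubeTrunc K α) i ⟨K, h⟩ else 1
      else 1

theorem cubeTrunc_self {n : ℕ} (α : Fin n → Bool) : cubeTrunc n α = α := by
  funext l
  simp [cubeTrunc]

theorem cubeTrunc_succ_of_false {n K : ℕ} (h : K < n) (α : Fin n → Bool)
    (hα : α ⟨K, h⟩ = false) : cubeTrunc (K + 1) α = cubeTrunc K α := by
  funext l
  by_cases hl : l = ⟨K, h⟩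
  · subst hl
    simp [cubeTrunc, hα]
  · have hne : l.val ≠ K := fun e => hl (Fin.ext e)
    have hiff : l.val < K + 1 ↔ l.val < K := by omega
    simp [cubeTrunc, hiff]

theorem cubeTrunc_succ_of_true {n K : ℕ} (h : K < n) (α : Fin n → Bool)
    (hα : α ⟨K, h⟩ = true) :
    cubeTrunc (K + 1) α = Function.update (cubeTrunc K α) ⟨K, h⟩ true := by
  funext l
  by_cases hl : l = ⟨K, h⟩
  · subst hl
    simp [cubeTrunc, hα]
  · have hne : l.val ≠ K := fun e => hl (Fin.ext e)
    have hiff : l.val < K + 1 ↔ l.val < K := by omega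
    simp [cubeTrunc, hiff, Function.update_of_ne hl]

theorem cubeTrunc_update_of_lt {n K : ℕ} (α : Fin n → Bool) (j : Fin n) (hj : j.val < K)
    (b : Bool) : cubeTrunc K (Function.update α j b) = Function.update (cubeTrunc K α) j b := by
  funext l
  by_cases hl : l = j
  · subst hl
    simp [cubeTrunc, hj]
  · simp [cubeTrunc, Function.update_of_ne hl]

theorem cubeTrunc_update_of_le {n K : ℕ} (α : Fin n → Bool) (j : Fin n) (hj : K ≤ j.val)
    (b : Bool) : cubeTrunc K (Function.update α j b) = cubeTrunc K α := by
  funext l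
  by_cases hl : l = j
  · subst hl
    simp [cubeTrunc, Nat.not_lt.mpr hj]
  · simp [cubeTrunc, Function.update_of_ne hl]

section

variable {G : Type*} [CommGroup G] {n : ℕ} (τ : (Fin n → Bool) → Fin n → Fin n → G)

theorem partialSign_succ (K : ℕ) (h : K < n) (α : Fin n → Bool) (i : Fin n) :
    partialSign τ (K + 1) α i = partialSign τ K α i *
      if i.val < K ∧ α ⟨K, h⟩ = true then τ (cubeTrunc K α) i ⟨K, h⟩ else 1 := by
  simp [partialSign, h]

theorem partialSign_eq_one (K : ℕ) (α : Fin n → Bool) (i : Fin n) (hK : K ≤ i.val + 1) :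
    partialSign τ K α i = 1 := by
  induction K with
  | zero => rfl
  | succ K ih =>
    rw [partialSign_succ τ K (by omega), ih (by omega), if_neg (by omega), one_mul]

theorem partialSign_update (K : ℕ) (α : Fin n → Bool) (i j : Fin n) (b : Bool)
    (hK : K ≤ j.val) :
    partialSign τ K (Function.update α j b) i = partialSign τ K α i := by
  induction K with
  | zero => rfl
  | succ K ih =>
    have hne : (⟨K, by omega⟩ : Fin n) ≠ j := fun e => by
      have := congrArg Fin.val e
      simp at this
      omega
    rw [partialSign_succ τ K (by omega), partialSign_succ τ K (by omega), ih (by omega),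
      Function.update_of_ne hne, cubeTrunc_update_of_le α j (by omega)]

/-- The face relation for partial products: on the face `(α, {i, j})` the coboundary of
`partialSign τ K` is the value of `τ` on the truncation of that face below `K`. -/
theorem partialSign_face
    (hsq : ∀ (α : Fin n → Bool) (i j : Fin n), i ≠ j → α i = false → α j = false →
      τ α i j ^ 2 = 1)
    (hcube : ∀ (α : Fin n → Bool) (i j k : Fin n), i ≠ j → i ≠ k → j ≠ k →
      α i = false → α j = false → α k = false →
      τ α i j * τ α i k * τ α j k *
        τ (Function.update α k true) i j *
        τ (Function.update α j true) i k *
        τ (Function.update α i true) j k = 1)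
    (α : Fin n → Bool) (i j : Fin n) (hij : i.val < j.val)
    (hi : α i = false) (hj : α j = false) (K : ℕ) (hjK : j.val + 1 ≤ K) (hKn : K ≤ n) :
    partialSign τ K α i * partialSign τ K (Function.update α i true) j =
      τ (cubeTrunc K α) i j *
        (partialSign τ K α j * partialSign τ K (Function.update α j true) i) := by
  have hne : i ≠ j := fun e => by simp [e] at hij
  have hz : ∀ (L : ℕ) (l : Fin n), α l = false → cubeTrunc L α l = false := by
    intro L l hl
    simp [cubeTrunc, hl]
  induction K, hjK using Nat.le_induction with
  | base =>
    have hs := hsq (cubeTrunc j.val α) i j hne (hz _ _ hi) (hz _ _ hj)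
    rw [partialSign_eq_one τ _ (Function.update α i true) j le_rfl,
      partialSign_eq_one τ _ α j le_rfl, partialSign_succ τ _ j.isLt,
      partialSign_succ τ _ j.isLt, partialSign_update τ _ α i j true le_rfl,
      cubeTrunc_succ_of_false j.isLt α hj, cubeTrunc_update_of_le α j le_rfl]
    simp only [Fin.eta, hj, Function.update_self, hij]
    rw [pow_two] at hs
    simp [mul_left_comm _ (partialSign τ _ _ _), hs]
  | succ K hjK ih =>
    have hK : K < n := hKn
    have ih := ih hK.le
    have hik : i ≠ ⟨K, hK⟩ := fun e => by
      have := congrArg Fin.val e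
      simp at this
      omega
    have hjk : j ≠ ⟨K, hK⟩ := fun e => by
      have := congrArg Fin.val e
      simp at this
      omega
    have hiK : i.val < K := by omega
    have hjK' : j.val < K := by omega
    simp only [partialSign_succ τ K hK, Function.update_of_ne hik.symm,
      Function.update_of_ne hjk.symm, hiK, hjK', true_and]
    cases hα : α ⟨K, hK⟩ with
    | false =>
      rw [cubeTrunc_succ_of_false hK α hα]
      simpa using ih
    | true =>
      rw [cubeTrunc_succ_of_true hK α hα, cubeTrunc_update_of_lt α i hiK,
        cubeTrunc_update_of_lt α j hjK']
      have hk : cubeTrunc K α ⟨K, hK⟩ = false := by simp [cubeTrunc]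
      have hβi := hz K i hi
      have hβj := hz K j hj
      have hc := hcube (cubeTrunc K α) i j ⟨K, hK⟩ hne hik hjk hβi hβj hk
      have h1 := hsq (Function.update (cubeTrunc K α) ⟨K, hK⟩ true) i j hne
        (by rw [Function.update_of_ne hik, hβi]) (by rw [Function.update_of_ne hjk, hβj])
      have h2 := hsq (cubeTrunc K α) j ⟨K, hK⟩ hjk hβj hk
      have h3 := hsq (Function.update (cubeTrunc K α) j true) i ⟨K, hK⟩ hik
        (by rw [Function.update_of_ne hne, hβi]) (by rw [Function.update_of_ne hjk.symm, hk])
      simp only [if_true]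
      generalize τ (Function.update (cubeTrunc K α) ⟨K, hK⟩ true) i j = T' at *
      generalize τ (Function.update (cubeTrunc K α) j true) i ⟨K, hK⟩ = w at *
      generalize τ (Function.update (cubeTrunc K α) i true) j ⟨K, hK⟩ = y at *
      generalize τ (cubeTrunc K α) i ⟨K, hK⟩ = x at *
      generalize τ (cubeTrunc K α) j ⟨K, hK⟩ = z at *
      generalize τ (cubeTrunc K α) i j = T at *
      generalize partialSign τ K α i = a at *
      generalize partialSign τ K α j = c at *
      generalize partialSign τ K (Function.update α i true) j = b at *
      generalize partialSign τ K (Function.update α j true) i = d at *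
      -- The cocycle condition solved for three of the faces, as all values square to `1`.
      have key : T * x * y = T' * z * w := by
        calc T * x * y = T * x * y * (T' ^ 2 * z ^ 2 * w ^ 2) := by rw [h1, h2, h3]; simp
          _ = (T * x * z * T' * w * y) * (T' * z * w) := by
            simp only [pow_two]; ac_rfl
          _ = T' * z * w := by rw [hc, one_mul]
      calc a * x * (b * y) = (a * b) * (x * y) := by ac_rfl
        _ = (T * x * y) * (c * d) := by rw [ih]; ac_rfl
        _ = T' * (c * z * (d * w)) := by rw [key]; ac_rfl

end


/-- Existence of a valid sign assignment for a commutativity 2-cocycle on the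
`n`-dimensional discrete hypercube.  Let `m ∈ G` with `m² = 1`, and let `σ` assign to
each square 2-face `(α, {i,j})` (encoded as a symmetric function of `i` and `j`)
an element of `G` squaring to `1`, such that on each 3-dimensional subcube the product
of the values of `σ` over its six square 2-faces is `1`.  Then there is an assignment
`ε` of elements of `G` to the edges of the hypercube such that for every square 2-face
`ε (α,i) · ε (α+eᵢ,j) = m · σ (α,{i,j}) · ε (α,j) · ε (α+eⱼ,i)`. -/
theorem exists_valid_sign_assignment {G : Type*} [CommGroup G] (n : ℕ)
    (m : G) (hm : m ^ 2 = 1)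
    (σ : (Fin n → Bool) → Fin n → Fin n → G)
    (hσsymm : ∀ (α : Fin n → Bool) (i j : Fin n), σ α i j = σ α j i)
    (hσsq : ∀ (α : Fin n → Bool) (i j : Fin n), i ≠ j → α i = false → α j = false →
      σ α i j ^ 2 = 1)
    (hσcube : ∀ (α : Fin n → Bool) (i j k : Fin n), i ≠ j → i ≠ k → j ≠ k →
      α i = false → α j = false → α k = false →
      σ α i j * σ α i k * σ α j k *
        σ (Function.update α k true) i j *
        σ (Function.update α j true) i k *
        σ (Function.update α i true) j k = 1) :
    ∃ ε : (Fin n → Bool) → Fin n → G,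
      ∀ (α : Fin n → Bool) (i j : Fin n), i ≠ j → α i = false → α j = false →
        ε α i * ε (Function.update α i true) j =
          m * σ α i j * (ε α j * ε (Function.update α j true) i) := by
  have hm6 : m * m * m * m * m * m = 1 := by
    calc m * m * m * m * m * m = (m ^ 2) ^ 3 := by simp only [pow_succ, pow_zero, one_mul, mul_assoc]
      _ = 1 := by rw [hm, one_pow]
  have hsq : ∀ (α : Fin n → Bool) (i j : Fin n), i ≠ j → α i = false → α j = false →
      (m * σ α i j) ^ 2 = 1 := by
    intro α i j hij hi hj
    rw [mul_pow, hm, hσsq α i j hij hi hj, one_mul]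
  have main := fun α i j hij hi hj =>
    partialSign_face (fun α i j => m * σ α i j) hsq (by
      intro α i j k hij hik hjk hi hj hk
      have hc := hσcube α i j k hij hik hjk hi hj hk
      refine Eq.trans ?_ ((congrArg₂ (· * ·) hm6 hc).trans (one_mul 1))
      ac_rfl) α i j hij hi hj n j.isLt le_rfl
  simp only [cubeTrunc_self] at main
  refine ⟨partialSign (fun α i j => m * σ α i j) n, ?_⟩
  intro α i j hij hi hj
  rcases lt_or_gt_of_ne (fun e => hij (Fin.ext e) : i.val ≠ j.val) with h | h
  · exact main α i j h hi hj
  -- The relation is symmetric under exchanging `i` and `j` because `m * σ α i j` squares to `1`.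
  · rw [main α j i h hj hi, hσsymm α j i, ← mul_assoc, ← pow_two, hsq α i j hij hi hj, one_mul]
end

section
/- Let G be an abelian group and let ε, ε' be two assignments of elements of G to the edges of the n-dimensional discrete hypercube such that for every square 2-face (α,{i,j}) the two assignments have the same commutation ratio, i.e. ε(α,i)·ε(α+eᵢ,j)·(ε(α,j)·ε(α+eⱼ,i))⁻¹ = ε'(α,i)·ε'(α+eᵢ,j)·(ε'(α,j)·ε'(α+eⱼ,i))⁻¹. Then there exists a function η : {0,1}ⁿ → G such that ε'(α,i) = η(α+eᵢ)·η(α)⁻¹·ε(α,i) for every edge (α,i). (Any two valid sign assignments for the same commutativity data differ by a coboundary.) -/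
/-!
The ratio `d = ε' / ε` is a multiplicative 1-cochain on the cube, and equality of the commutation
ratios says exactly that `d` is closed: the two paths around any square 2-face have the same
`d`-product. The cube has trivial first cohomology, so `d` is a coboundary
(`exists_potential_of_closed`). This is proved by induction on the dimension: a potential on the
face `α 0 = false` extends to the opposite face along the edges in direction `0`, and closedness
on the squares containing direction `0` gives the coboundary equation on the opposite face.
-/

/-- Closed multiplicative 1-cochains on the discrete cube are exact. -/
theorem exists_potential_of_closed {G : Type*} [CommGroup G] (n : ℕ)
    (d : (Fin n → Bool) → Fin n → G)
    (hd : ∀ (α : Fin n → Bool) (i j : Fin n), i ≠ j → α i = false → α j = false →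
      d α i * d (Function.update α i true) j = d α j * d (Function.update α j true) i) :
    ∃ η : (Fin n → Bool) → G, ∀ (α : Fin n → Bool) (i : Fin n), α i = false →
      η (Function.update α i true) = η α * d α i := by
  induction n with
  | zero => exact ⟨fun _ => 1, fun _ i => i.elim0⟩
  | succ n ih =>
    obtain ⟨η, hη⟩ := ih (fun β i => d (Fin.cons false β) i.succ) (by
      intro β i j hij hi hj
      simpa using hd (Fin.cons false β) i.succ j.succ (by simpa using hij)
        (by simpa using hi) (by simpa using hj))
    refine ⟨fun α => if α 0 = true then η (Fin.tail α) * d (Fin.cons false (Fin.tail α)) 0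
      else η (Fin.tail α), fun α i hi => ?_⟩
    obtain ⟨b, β, rfl⟩ : ∃ b β, α = Fin.cons b β := ⟨α 0, Fin.tail α, (Fin.cons_self_tail α).symm⟩
    refine Fin.cases (fun hi => ?_) (fun i hi => ?_) i hi
    · obtain rfl : b = false := by simpa using hi
      simp
    · have hβ : β i = false := by simpa using hi
      have h := hη β i hβ
      cases b with
      | false => simpa [← Fin.cons_update] using h
      | true =>
        have hsq := hd (Fin.cons false β) i.succ 0 (Fin.succ_ne_zero i) (by simpa using hβ) rfl
        simp only [← Fin.cons_update, Fin.update_cons_zero] at hsq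
        simp [← Fin.cons_update, h, mul_assoc, hsq]

/-- Any two valid sign assignments for the same commutativity data differ by a
coboundary: if `ε` and `ε'` assign elements of the abelian group `G` to the edges of
the `n`-dimensional discrete hypercube and have the same commutation ratio on every
square 2-face, then there is a vertex function `η` with
`ε' (α,i) = η (α+eᵢ) · η α⁻¹ · ε (α,i)` for every edge `(α,i)`. -/
theorem sign_assignments_differ_by_coboundary {G : Type*} [CommGroup G] (n : ℕ)
    (ε ε' : (Fin n → Bool) → Fin n → G)
    (hratio : ∀ (α : Fin n → Bool) (i j : Fin n), i ≠ j → α i = false → α j = false →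
      ε α i * ε (Function.update α i true) j *
        (ε α j * ε (Function.update α j true) i)⁻¹ =
      ε' α i * ε' (Function.update α i true) j *
        (ε' α j * ε' (Function.update α j true) i)⁻¹) :
    ∃ η : (Fin n → Bool) → G, ∀ (α : Fin n → Bool) (i : Fin n), α i = false →
      ε' α i = η (Function.update α i true) * (η α)⁻¹ * ε α i := by
  obtain ⟨η, hη⟩ := exists_potential_of_closed n (fun α i => ε' α i * (ε α i)⁻¹) (by
    intro α i j hij hi hj
    have h := hratio α i j hij hi hj
    simp only [← div_eq_mul_inv] at h ⊢
    rw [div_eq_div_iff_mul_eq_mul] at h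
    rw [div_mul_div_comm, div_mul_div_comm, div_eq_div_iff_mul_eq_mul, ← h, mul_comm])
  refine ⟨η, fun α i hi => ?_⟩
  rw [hη α i hi, mul_inv_cancel_comm, inv_mul_cancel_right]
end

section
/- Let G be an abelian group and consider the (n+1)-dimensional discrete hypercube with vertex set {0,1}×{0,1}ⁿ. Let ε and ε' be two assignments of elements of G to the edges such that: (1) for every square 2-face, ε and ε' have the same commutation ratio, i.e. ε(α,i)·ε(α+eᵢ,j)·(ε(α,j)·ε(α+eⱼ,i))⁻¹ = ε'(α,i)·ε'(α+eᵢ,j)·(ε'(α,j)·ε'(α+eⱼ,i))⁻¹; and (2) ε and ε' agree on every edge whose two endpoints have the same first coordinate (i.e. every edge contained in one of the two opposite facets {0}×{0,1}ⁿ and {1}×{0,1}ⁿ). Then there exists a single element c ∈ G such that ε'(e) = c·ε(e) for every edge e joining (0,β) to (1,β). -/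
/-! The quantity `ε' α 0 / ε α 0`, attached to the edge in direction `0` at `α`, is constant.
For a square 2-face spanned by the directions `0` and `j ≠ 0`, the two edges in direction `j`
carry equal values of `ε` and `ε'`, so they cancel from the equality of commutation ratios, and
what remains says that the two parallel edges in direction `0` have the same quotient
(`saddle_quotient_step`). The facet `{0} × {0,1}ⁿ` is connected: any of its vertices is joined to
the zero vertex by switching off the coordinates equal to `1` one at a time. -/

/-- The square 2-face relation after cancelling the values `A`, `B` shared by both assignments on
the edges transverse to direction `0`. -/
lemma saddle_face_cancel {G : Type*} [CommGroup G] {a b a' b' A B : G}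
    (h : a * A * (B * b)⁻¹ = a' * A * (B * b')⁻¹) : a' / a = b' / b := by
  have h1 : a * b⁻¹ = a' * b'⁻¹ := by
    have h2 : (a * b⁻¹) * (A * B⁻¹) = (a' * b'⁻¹) * (A * B⁻¹) := by
      calc (a * b⁻¹) * (A * B⁻¹) = a * A * (B * b)⁻¹ := by
            simp only [mul_inv, mul_assoc, mul_left_comm, mul_comm]
        _ = a' * A * (B * b')⁻¹ := h
        _ = (a' * b'⁻¹) * (A * B⁻¹) := by
            simp only [mul_inv, mul_assoc, mul_left_comm, mul_comm]
    exact mul_right_cancel h2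
  rw [← div_eq_mul_inv, ← div_eq_mul_inv, div_eq_div_iff_mul_eq_mul] at h1
  rw [div_eq_div_iff_mul_eq_mul, ← h1, mul_comm]

/-- Parallel edges in direction `0` of a square 2-face have the same quotient `ε' / ε`. -/
lemma saddle_quotient_step {G : Type*} [CommGroup G] {n : ℕ}
    {ε ε' : (Fin (n + 1) → Bool) → Fin (n + 1) → G}
    (hratio : ∀ (α : Fin (n + 1) → Bool) (i j : Fin (n + 1)),
      i ≠ j → α i = false → α j = false →
      ε α i * ε (Function.update α i true) j *
        (ε α j * ε (Function.update α j true) i)⁻¹ =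
      ε' α i * ε' (Function.update α i true) j *
        (ε' α j * ε' (Function.update α j true) i)⁻¹)
    (hfacets : ∀ (α : Fin (n + 1) → Bool) (i : Fin (n + 1)),
      i ≠ 0 → α i = false → ε' α i = ε α i)
    (α : Fin (n + 1) → Bool) (j : Fin (n + 1)) (hj : j ≠ 0)
    (h0 : α 0 = false) (hαj : α j = false) :
    ε' α 0 / ε α 0 =
      ε' (Function.update α j true) 0 / ε (Function.update α j true) 0 := by
  have h := hratio α 0 j hj.symm h0 hαj
  rw [hfacets α j hj hαj,
    hfacets (Function.update α 0 true) j hj (by rw [Function.update_of_ne hj, hαj])] at h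
  exact saddle_face_cancel h


/-- Well-definedness of the saddle map up to a single overall invertible scalar.
Consider the `(n+1)`-dimensional discrete hypercube with vertex set
`{0,1} × {0,1}ⁿ`, encoded as `Fin (n+1) → Bool` with coordinate `0` as the
distinguished first coordinate.  Let `ε` and `ε'` be two edge assignments valued in an
abelian group `G` which have the same commutation ratio on every square 2-face and
which agree on every edge contained in one of the two opposite facets (every edge not
changing coordinate `0`).  Then there is a single `c ∈ G` with `ε' e = c · ε e` for
every edge `e` joining `(0, β)` to `(1, β)`. -/
theorem saddle_sign_unique_up_to_global_scalar {G : Type*} [CommGroup G] (n : ℕ)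
    (ε ε' : (Fin (n + 1) → Bool) → Fin (n + 1) → G)
    (hratio : ∀ (α : Fin (n + 1) → Bool) (i j : Fin (n + 1)),
      i ≠ j → α i = false → α j = false →
      ε α i * ε (Function.update α i true) j *
        (ε α j * ε (Function.update α j true) i)⁻¹ =
      ε' α i * ε' (Function.update α i true) j *
        (ε' α j * ε' (Function.update α j true) i)⁻¹)
    (hfacets : ∀ (α : Fin (n + 1) → Bool) (i : Fin (n + 1)),
      i ≠ 0 → α i = false → ε' α i = ε α i) :
    ∃ c : G, ∀ α : Fin (n + 1) → Bool, α 0 = false → ε' α 0 = c * ε α 0 := by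
  -- Induction on the number of coordinates of the vertex equal to `1`.
  have key : ∀ (k : ℕ) (α : Fin (n + 1) → Bool), α 0 = false →
      (Finset.univ.filter fun j => α j = true).card = k →
      ε' α 0 / ε α 0 = ε' (fun _ => false) 0 / ε (fun _ => false) 0 := by
    intro k
    induction k with
    | zero =>
      intro α _ hk
      have hα : α = fun _ => false := by
        funext j
        have := Finset.filter_eq_empty_iff.mp (Finset.card_eq_zero.mp hk) (Finset.mem_univ j)
        simpa using this
      rw [hα]
    | succ k ih =>
      intro α h0 hk
      obtain ⟨j, hj⟩ := Finset.card_pos.mp (by rw [hk]; exact k.succ_pos)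
      have hαj : α j = true := by simpa using hj
      have hj0 : j ≠ 0 := by
        rintro rfl
        simp [h0] at hαj
      have hβ0 : Function.update α j false 0 = false := by
        rw [Function.update_of_ne hj0.symm, h0]
      have hcard : (Finset.univ.filter fun l => Function.update α j false l = true).card = k := by
        have : (Finset.univ.filter fun l => Function.update α j false l = true) =
            (Finset.univ.filter fun l => α l = true).erase j := by
          ext l
          by_cases hl : l = j
          · simp [hl]
          · simp [hl]
        rw [this, Finset.card_erase_of_mem hj, hk, Nat.add_sub_cancel]
      have hstep := saddle_quotient_step hratio hfacets (Function.update α j false) j hj0 hβ0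
        (Function.update_self ..)
      rw [Function.update_idem, ← hαj, Function.update_eq_self] at hstep
      rw [← hstep]
      exact ih _ hβ0 hcard
  exact ⟨_, fun α h0 => div_eq_iff_eq_mul.mp (key _ α h0 rfl)⟩
end
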